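/- arXiv:1710.10603 — 4 statements merged into one kernel-verified Lean document; each statement's English description precedes it below -/
import Mathlib

section
/- Let k ≥ 0 be an integer, let Φ be a measurable function on ℝ^n, and let A(y) = (a_{ij}(y)) be a measurable n×n-matrix-valued function with A(y) invertible for a.e. y in the support of Φ, satisfying ∫_{ℝ^n} |det A(y)|^{-1} (1 + ‖A(y)‖^k) |Φ(y)| dy < ∞. Then for every f ∈ W^{k,1}(ℝ^n) and every multi-index α = (α_1, …, α_n) with |α| ≤ k, the weak derivative of H_{Φ,A} f of order α is given for a.e. x by D^α(H_{Φ,A} f)(x) = ∫_{ℝ^n} Φ(y) · [∏_{j=1}^n (Σ_{i=1}^n a_{ij}(y) ∂/∂x_i)^{α_j}](f)(A(y)x) dy, i.e. for every test function φ ∈ C_c^∞(ℝ^n), ∫ H_{Φ,A} f(x) D^α φ(x) dx = (−1)^{|α|} ∫ [∫ Φ(y) (∏_{j=1}^n (Σ_{i=1}^n a_{ij}(y) ∂/∂x_i)^{α_j})(f)(A(y)x) dy] φ(x) dx. -/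
open MeasureTheory

noncomputable section

/-- Action of an `n × n` matrix on a vector of `ℝⁿ` (Euclidean space). -/
def matVec {n : ℕ} (M : Matrix (Fin n) (Fin n) ℝ) (x : EuclideanSpace ℝ (Fin n)) :
    EuclideanSpace ℝ (Fin n) :=
  (WithLp.equiv 2 (Fin n → ℝ)).symm (M.mulVec (WithLp.equiv 2 (Fin n → ℝ) x))

/-- Hilbert–Schmidt (Frobenius) norm of a matrix. -/
def frobNorm {n : ℕ} (M : Matrix (Fin n) (Fin n) ℝ) : ℝ :=
  Real.sqrt (∑ i, ∑ j, (M i j) ^ 2)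

/-- Classical partial derivative `∂/∂xᵢ`. -/
def pderiv1 {n : ℕ} (i : Fin n) (f : EuclideanSpace ℝ (Fin n) → ℝ) :
    EuclideanSpace ℝ (Fin n) → ℝ :=
  fun x => fderiv ℝ f x (EuclideanSpace.single i 1)

/-- Classical multi-index derivative `D^α = ∂^{α₁}_{x₁} ⋯ ∂^{αₙ}_{xₙ}`. -/
def mderiv {n : ℕ} (α : Fin n → ℕ) (f : EuclideanSpace ℝ (Fin n) → ℝ) :
    EuclideanSpace ℝ (Fin n) → ℝ :=
  (List.finRange n).foldr (fun i g => (pderiv1 i)^[α i] g) f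

/-- `g` is the weak derivative of order `α` of `f`:
`∫ f · D^α φ = (−1)^{|α|} ∫ g · φ` for all test functions `φ ∈ C_c^∞`. -/
def IsWeakDeriv {n : ℕ} (α : Fin n → ℕ) (f g : EuclideanSpace ℝ (Fin n) → ℝ) : Prop :=
  ∀ φ : EuclideanSpace ℝ (Fin n) → ℝ, ContDiff ℝ (⊤ : ℕ∞) φ → HasCompactSupport φ →
    ∫ x, f x * mderiv α φ x = (-1 : ℝ) ^ (∑ i, α i) * ∫ x, g x * φ x

/-- `D` is a family of integrable weak derivatives of `f` for all multi-indices `|α| ≤ k`;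
this expresses `f ∈ W^{k,1}(ℝⁿ)` together with a choice of its weak derivatives. -/
def HasSobolevDerivs {n : ℕ} (k : ℕ) (f : EuclideanSpace ℝ (Fin n) → ℝ)
    (D : (Fin n → ℕ) → EuclideanSpace ℝ (Fin n) → ℝ) : Prop :=
  D 0 = f ∧ ∀ α : Fin n → ℕ, (∑ i, α i) ≤ k → Integrable (D α) ∧ IsWeakDeriv α f (D α)

/-- The Sobolev norm `‖f‖_{W^{k,1}} = Σ_{|α| ≤ k} ‖D^α f‖_{L¹}`, computed from a family `D`
of weak derivatives. -/
def sobolevNorm {n : ℕ} (k : ℕ) (D : (Fin n → ℕ) → EuclideanSpace ℝ (Fin n) → ℝ) : ℝ :=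
  ∑ α ∈ (Fintype.piFinset fun _ : Fin n => Finset.range (k + 1)).filter
      (fun α => ∑ i, α i ≤ k), ∫ x, |D α x|

/-- The generalized Hausdorff operator `H_{Φ,A} f (x) = ∫ Φ(y) f(A(y)x) dy`. -/
def hausdorffOp {n : ℕ} (Φ : EuclideanSpace ℝ (Fin n) → ℝ)
    (A : EuclideanSpace ℝ (Fin n) → Matrix (Fin n) (Fin n) ℝ)
    (f : EuclideanSpace ℝ (Fin n) → ℝ) : EuclideanSpace ℝ (Fin n) → ℝ :=
  fun x => ∫ y, Φ y * f (matVec (A y) x)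

/-- The differential operator `[∏_{j=1}^n (Σ_{i=1}^n a_{ij} ∂/∂xᵢ)^{α_j}]` applied to a function
with weak-derivative family `D`, expanded by multilinearity: a sum over all choices `c` picking,
for each factor slot, an index `i`, of the product of the corresponding matrix entries times the
weak derivative of the resulting total order. -/
def dirOp {n : ℕ} (M : Matrix (Fin n) (Fin n) ℝ) (α : Fin n → ℕ)
    (D : (Fin n → ℕ) → EuclideanSpace ℝ (Fin n) → ℝ) :
    EuclideanSpace ℝ (Fin n) → ℝ :=
  fun x => ∑ c : (j : Fin n) → Fin (α j) → Fin n,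
    (∏ j, ∏ s, M (c j s) j) *
      D (fun i => ∑ j, (Finset.univ.filter (fun s => c j s = i)).card) x

/-!
For a single invertible matrix `M`, the chain rule expands `D^α (ψ ∘ M)` by multilinearity into
`dirOp M α` applied to the partial derivatives of `ψ`, evaluated at `M x`; the number of factors
being the same in each term, one integration by parts per term and the substitution `z = M x`
show that `dirOp M α D ∘ M` is the weak derivative of `f ∘ M`. Fubini's theorem then integrates
this identity over `y` for `M = A y`: the substitution costs `|det A y|⁻¹` and the coefficients of
`dirOp (A y) α` are at most `‖A y‖ ^ |α|`, so the integrability condition on `Φ` gives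
absolute convergence on the product space.
-/

section LineDerivatives

variable {E F : Type*} [NormedAddCommGroup E] [NormedSpace ℝ E]
  [NormedAddCommGroup F] [NormedSpace ℝ F] {f : E → F}

/-- The iterated directional derivative `∂_{v₁} ⋯ ∂_{vₘ} f` along a list `[v₁, …, vₘ]` of
directions. Unlike `iteratedFDeriv`, it lets the directions be permuted as a list. -/
def listLineDeriv (l : List E) (f : E → F) : E → F :=
  l.foldr (fun v g x => fderiv ℝ g x v) f

theorem contDiff_listLineDeriv (hf : ContDiff ℝ (⊤ : ℕ∞) f) (l : List E) :
    ContDiff ℝ (⊤ : ℕ∞) (listLineDeriv l f) := by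
  induction l with
  | nil => exact hf
  | cons v l ih => exact (ih.fderiv_right (by norm_cast)).clm_apply contDiff_const

theorem hasCompactSupport_listLineDeriv (hf : HasCompactSupport f) (l : List E) :
    HasCompactSupport (listLineDeriv l f) := by
  induction l with
  | nil => exact hf
  | cons v l ih => exact ih.fderiv_apply ℝ v

theorem fderiv_fderiv_apply_comm (hf : ContDiff ℝ 2 f) (v w x : E) :
    fderiv ℝ (fun y => fderiv ℝ f y v) x w = fderiv ℝ (fun y => fderiv ℝ f y w) x v := by
  have hdiff : Differentiable ℝ (fderiv ℝ f) :=
    (hf.fderiv_right (m := 1) (by norm_num)).differentiable (by simp)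
  have hsymm : IsSymmSndFDerivAt ℝ f x := hf.contDiffAt.isSymmSndFDerivAt (by simp)
  have second_eq (a b : E) :
      fderiv ℝ (fun y => fderiv ℝ f y a) x b = fderiv ℝ (fderiv ℝ f) x b a := by
    simp [fderiv_clm_apply (hdiff x) (differentiableAt_const a)]
  rw [second_eq, second_eq, hsymm.eq]

theorem listLineDeriv_perm (hf : ContDiff ℝ (⊤ : ℕ∞) f) {l l' : List E} (h : l.Perm l') :
    listLineDeriv l f = listLineDeriv l' f := by
  induction h with
  | nil => rfl
  | cons v _ ih => exact congrArg (fun g x => fderiv ℝ g x v) ih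
  | swap v w l =>
    exact funext <| fderiv_fderiv_apply_comm
      ((contDiff_listLineDeriv hf l).of_le (WithTop.coe_le_coe.2 le_top)) v w
  | trans _ _ ih₁ ih₂ => exact ih₁.trans ih₂

theorem iteratedFDeriv_apply_eq_listLineDeriv (hf : ContDiff ℝ (⊤ : ℕ∞) f) {m : ℕ}
    (v : Fin m → E) (x : E) :
    iteratedFDeriv ℝ m f x v = listLineDeriv (List.ofFn v) f x := by
  induction m generalizing x with
  | zero => simp [listLineDeriv]
  | succ m ih =>
    have hdiff : DifferentiableAt ℝ (iteratedFDeriv ℝ m f) x :=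
      hf.differentiable_iteratedFDeriv (by exact_mod_cast ENat.natCast_lt_top m) x
    calc iteratedFDeriv ℝ (m + 1) f x v
        = fderiv ℝ (fun y => iteratedFDeriv ℝ m f y (Fin.tail v)) x (v 0) := by
          rw [fderiv_continuousMultilinear_apply_const_apply hdiff,
            iteratedFDeriv_succ_apply_left]
      _ = listLineDeriv (List.ofFn v) f x := by
          rw [funext (ih (Fin.tail v)), List.ofFn_succ]; rfl

theorem listLineDeriv_replicate_append (m : ℕ) (v : E) (l : List E) (f : E → F) :
    listLineDeriv (List.replicate m v ++ l) f
      = (fun g x => fderiv ℝ g x v)^[m] (listLineDeriv l f) := by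
  induction m with
  | zero => rfl
  | succ m ih => rw [Function.iterate_succ_apply', ← ih]; rfl

end LineDerivatives

section MultiIndex

variable {ι ι' κ : Type*} [Fintype ι] [Fintype ι'] [DecidableEq κ]

/-- The multi-index whose `i`-th entry counts the occurrences of `i` in the tuple `r`, so that
`∂_{r₁} ⋯ ∂_{rₘ} = D^α` for `α = multiIndex r`. -/
def multiIndex (r : ι → κ) : κ → ℕ := fun i => (Finset.univ.filter fun s => r s = i).card

theorem sum_multiIndex [Fintype κ] (r : ι → κ) : ∑ i, multiIndex r i = Fintype.card ι :=
  (Finset.card_eq_sum_card_fiberwise fun _ _ => Finset.mem_coe.2 (Finset.mem_univ _)).symm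

theorem multiIndex_comp_equiv (r : ι → κ) (e : ι' ≃ ι) :
    multiIndex (r ∘ e) = multiIndex r := by
  funext i
  simp only [multiIndex, Finset.card_filter]
  exact Equiv.sum_comp e fun s => if r s = i then 1 else 0

theorem multiIndex_sigma {β : ι → Type*} [∀ j, Fintype (β j)] (r : (Σ j, β j) → κ) (i : κ) :
    multiIndex r i = ∑ j, multiIndex (fun s => r ⟨j, s⟩) i := by
  simp only [multiIndex, Finset.card_filter, Fintype.sum_sigma]

theorem multiIndex_sigma_fst [Fintype κ] (α : κ → ℕ) :
    multiIndex (Sigma.fst : (Σ j, Fin (α j)) → κ) = α := by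
  funext i
  rw [multiIndex_sigma, Finset.sum_eq_single i] <;> simp +contextual [multiIndex]

theorem count_ofFn_eq_multiIndex {m : ℕ} (r : Fin m → κ) (i : κ) :
    (List.ofFn r).count i = multiIndex r i := by
  unfold multiIndex
  induction m with
  | zero => simp
  | succ m ih =>
    rw [List.ofFn_succ, List.count_cons, ih, Fin.card_filter_univ_succ]
    simp only [beq_iff_eq]
    split_ifs <;> simp_all

theorem count_flatMap_replicate {n : ℕ} (α : Fin n → ℕ) (i : Fin n) :
    ((List.finRange n).flatMap fun j => List.replicate (α j) j).count i = α i := by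
  have sum_map (g : Fin n → ℕ) : ((List.finRange n).map g).sum = ∑ j, g j := by
    rw [← List.sum_ofFn, List.ofFn_eq_map]
  simp [List.count_flatMap, sum_map, List.count_replicate]

end MultiIndex

section Mderiv

variable {n : ℕ} {f : EuclideanSpace ℝ (Fin n) → ℝ}

theorem mderiv_eq_listLineDeriv (α : Fin n → ℕ) (f : EuclideanSpace ℝ (Fin n) → ℝ) :
    mderiv α f = listLineDeriv (((List.finRange n).flatMap fun i => List.replicate (α i) i).map
      fun i => EuclideanSpace.single i 1) f := by
  unfold mderiv
  induction List.finRange n with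
  | nil => rfl
  | cons i l ih =>
    rw [List.flatMap_cons, List.map_append, List.map_replicate, listLineDeriv_replicate_append,
      ← ih]
    rfl

theorem contDiff_mderiv (hf : ContDiff ℝ (⊤ : ℕ∞) f) (α : Fin n → ℕ) :
    ContDiff ℝ (⊤ : ℕ∞) (mderiv α f) :=
  mderiv_eq_listLineDeriv α f ▸ contDiff_listLineDeriv hf _

theorem hasCompactSupport_mderiv (hf : HasCompactSupport f) (α : Fin n → ℕ) :
    HasCompactSupport (mderiv α f) :=
  mderiv_eq_listLineDeriv α f ▸ hasCompactSupport_listLineDeriv hf _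

theorem iteratedFDeriv_single_eq_mderiv (hf : ContDiff ℝ (⊤ : ℕ∞) f) {m : ℕ} (r : Fin m → Fin n)
    (x : EuclideanSpace ℝ (Fin n)) :
    iteratedFDeriv ℝ m f x (fun s => EuclideanSpace.single (r s) 1)
      = mderiv (multiIndex r) f x := by
  have hperm : (List.ofFn r).Perm
      ((List.finRange n).flatMap fun i => List.replicate (multiIndex r i) i) :=
    List.perm_iff_count.2 fun i => by rw [count_ofFn_eq_multiIndex, count_flatMap_replicate]
  rw [iteratedFDeriv_apply_eq_listLineDeriv hf, mderiv_eq_listLineDeriv,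
    ← listLineDeriv_perm hf (hperm.map _), List.map_ofFn]
  rfl

end Mderiv

section MatVec

variable {n : ℕ} (M : Matrix (Fin n) (Fin n) ℝ)

theorem matVec_single (j : Fin n) :
    matVec M (EuclideanSpace.single j 1) = ∑ i, M i j • EuclideanSpace.single i (1 : ℝ) := by
  ext i
  simp [matVec, Pi.single_apply]

theorem dirOp_eq_sum_multiIndex (α : Fin n → ℕ)
    (D : (Fin n → ℕ) → EuclideanSpace ℝ (Fin n) → ℝ) (x : EuclideanSpace ℝ (Fin n)) :
    dirOp M α D x = ∑ r : (Σ j, Fin (α j)) → Fin n, (∏ p, M (r p) p.1) * D (multiIndex r) x := by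
  rw [← Equiv.sum_comp (Equiv.piCurry fun (j : Fin n) (_ : Fin (α j)) => Fin n).symm]
  refine Finset.sum_congr rfl fun c _ => ?_
  rw [Fintype.prod_sigma, funext (multiIndex_sigma _)]
  rfl

theorem sum_multiIndex_sigma {α : Fin n → ℕ} (r : (Σ j, Fin (α j)) → Fin n) :
    ∑ i, multiIndex r i = ∑ i, α i := by
  simp [sum_multiIndex]

theorem mderiv_comp_matVec {ψ : EuclideanSpace ℝ (Fin n) → ℝ} (hψ : ContDiff ℝ (⊤ : ℕ∞) ψ)
    (α : Fin n → ℕ) (x : EuclideanSpace ℝ (Fin n)) :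
    mderiv α (fun y => ψ (matVec M y)) x = dirOp M α (fun β => mderiv β ψ) (matVec M x) := by
  let L := Matrix.toEuclideanCLM (n := Fin n) (𝕜 := ℝ) M
  let e : Fin (∑ j, α j) ≃ Σ j, Fin (α j) := finSigmaFinEquiv.symm
  calc mderiv α (fun y => ψ (matVec M y)) x
      = mderiv (multiIndex (Sigma.fst ∘ e)) (ψ ∘ L) x := by
        rw [multiIndex_comp_equiv, multiIndex_sigma_fst]; rfl
    _ = iteratedFDeriv ℝ _ ψ (L x) fun s => L (EuclideanSpace.single (e s).1 1) := by
        rw [← iteratedFDeriv_single_eq_mderiv (hψ.comp L.contDiff),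
          L.iteratedFDeriv_comp_right hψ x (by exact_mod_cast le_top)]
        rfl
    _ = iteratedFDeriv ℝ _ ψ (L x)
          fun s => ∑ i, M i (e s).1 • EuclideanSpace.single i (1 : ℝ) :=
        congrArg _ (funext fun s => matVec_single M (e s).1)
    _ = ∑ r : Fin (∑ j, α j) → Fin n,
          (∏ s, M (r s) (e s).1) * mderiv (multiIndex r) ψ (L x) := by
        simp only [ContinuousMultilinearMap.map_sum, ContinuousMultilinearMap.map_smul_univ,
          smul_eq_mul, iteratedFDeriv_single_eq_mderiv hψ]
    _ = ∑ r : (Σ j, Fin (α j)) → Fin n, (∏ p, M (r p) p.1) * mderiv (multiIndex r) ψ (L x) := by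
        rw [← Equiv.sum_comp (e.symm.arrowCongr (Equiv.refl (Fin n)))]
        refine Finset.sum_congr rfl fun r _ => ?_
        rw [← Equiv.prod_comp e fun p => M (r p) p.1, ← multiIndex_comp_equiv r e]
        rfl
    _ = dirOp M α (fun β => mderiv β ψ) (matVec M x) :=
        (dirOp_eq_sum_multiIndex M α (fun β => mderiv β ψ) (L x)).symm

theorem abs_apply_le_frobNorm (i j : Fin n) : |M i j| ≤ frobNorm M := by
  refine Real.abs_le_sqrt ?_
  calc M i j ^ 2 ≤ ∑ j', M i j' ^ 2 :=
        Finset.single_le_sum (f := fun j' => M i j' ^ 2) (fun _ _ => sq_nonneg _)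
          (Finset.mem_univ j)
    _ ≤ ∑ i', ∑ j', M i' j' ^ 2 :=
        Finset.single_le_sum (f := fun i' => ∑ j', M i' j' ^ 2)
          (fun _ _ => Finset.sum_nonneg fun _ _ => sq_nonneg _) (Finset.mem_univ i)

theorem abs_prod_apply_le_frobNorm_pow {ι : Type*} [Fintype ι] (r c : ι → Fin n) :
    |∏ p, M (r p) (c p)| ≤ frobNorm M ^ Fintype.card ι := by
  rw [Finset.abs_prod, ← Finset.card_univ, ← Finset.prod_const]
  exact Finset.prod_le_prod (fun _ _ => abs_nonneg _)
    fun p _ => abs_apply_le_frobNorm M (r p) (c p)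

theorem det_toEuclideanLin : LinearMap.det (Matrix.toEuclideanLin M) = M.det :=
  LinearMap.det_toLin (PiLp.basisFun 2 ℝ (Fin n)) M

end MatVec

section ChangeOfVariables

variable {E F : Type*} [NormedAddCommGroup E] [NormedSpace ℝ E] [MeasurableSpace E] [BorelSpace E]
  [FiniteDimensional ℝ E] [NormedAddCommGroup F] {L : E →ₗ[ℝ] E}

theorem measurableEmbedding_of_det_ne_zero (hL : LinearMap.det L ≠ 0) : MeasurableEmbedding L :=
  (L.equivOfDetNeZero hL).toContinuousLinearEquiv.toHomeomorph.measurableEmbedding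

variable (μ : Measure E) [μ.IsAddHaarMeasure]

theorem integral_comp_linearMap [NormedSpace ℝ F] (hL : LinearMap.det L ≠ 0) (g : E → F) :
    ∫ x, g (L x) ∂μ = |LinearMap.det L|⁻¹ • ∫ x, g x ∂μ := by
  rw [← (measurableEmbedding_of_det_ne_zero hL).integral_map,
    Measure.map_linearMap_addHaar_eq_smul_addHaar μ hL, integral_smul_measure,
    ENNReal.toReal_ofReal (abs_nonneg _), abs_inv]

theorem integrable_comp_linearMap (hL : LinearMap.det L ≠ 0) {g : E → F} (hg : Integrable g μ) :
    Integrable (fun x => g (L x)) μ := by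
  refine (measurableEmbedding_of_det_ne_zero hL).integrable_map_iff.1 ?_
  rw [Measure.map_linearMap_addHaar_eq_smul_addHaar μ hL]
  exact hg.smul_measure ENNReal.ofReal_ne_top

end ChangeOfVariables

section WeakDerivatives

variable {n : ℕ} {α : Fin n → ℕ}

theorem IsWeakDeriv.const_mul {f g : EuclideanSpace ℝ (Fin n) → ℝ} (h : IsWeakDeriv α f g)
    (c : ℝ) : IsWeakDeriv α (fun x => c * f x) (fun x => c * g x) := fun φ hφ hφc => by
  simp only [mul_assoc, integral_const_mul, h φ hφ hφc]
  ring

theorem IsWeakDeriv.integral {Y : Type*} [MeasurableSpace Y] {ν : Measure Y} [SFinite ν]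
    {F G : Y → EuclideanSpace ℝ (Fin n) → ℝ}
    (hF : Integrable (Function.uncurry F) (ν.prod volume))
    (hG : Integrable (Function.uncurry G) (ν.prod volume))
    (h : ∀ᵐ y ∂ν, IsWeakDeriv α (F y) (G y)) :
    IsWeakDeriv α (fun x => ∫ y, F y x ∂ν) (fun x => ∫ y, G y x ∂ν) := by
  have fubini {H : Y → EuclideanSpace ℝ (Fin n) → ℝ} {χ : EuclideanSpace ℝ (Fin n) → ℝ}
      (hH : Integrable (Function.uncurry H) (ν.prod volume)) (hχ : Continuous χ)
      (hχc : HasCompactSupport χ) :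
      ∫ x, (∫ y, H y x ∂ν) * χ x = ∫ y, (∫ x, H y x * χ x) ∂ν := by
    obtain ⟨C, hC⟩ := hχc.exists_bound_of_continuous hχ
    have hHχ : Integrable (Function.uncurry fun y x => H y x * χ x) (ν.prod volume) :=
      hH.mul_bdd (c := C) (hχ.comp_aestronglyMeasurable measurable_snd.aestronglyMeasurable)
        (.of_forall fun p => hC p.2)
    simp only [← integral_mul_const]
    exact (integral_integral_swap hHχ).symm
  intro φ hφ hφc
  rw [fubini hF (contDiff_mderiv hφ α).continuous (hasCompactSupport_mderiv hφc α),
    fubini hG hφ.continuous hφc, ← integral_const_mul]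
  exact integral_congr_ae (h.mono fun y hy => hy φ hφ hφc)

theorem integral_mul_dirOp_mderiv (M : Matrix (Fin n) (Fin n) ℝ)
    {f : EuclideanSpace ℝ (Fin n) → ℝ} {D : (Fin n → ℕ) → EuclideanSpace ℝ (Fin n) → ℝ}
    (hf : LocallyIntegrable f)
    (hD : ∀ β : Fin n → ℕ, ∑ i, β i = ∑ i, α i → LocallyIntegrable (D β) ∧ IsWeakDeriv β f (D β))
    {ψ : EuclideanSpace ℝ (Fin n) → ℝ} (hψ : ContDiff ℝ (⊤ : ℕ∞) ψ) (hψc : HasCompactSupport ψ) :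
    ∫ x, f x * dirOp M α (fun β => mderiv β ψ) x
      = (-1) ^ (∑ i, α i) * ∫ x, dirOp M α D x * ψ x := by
  have integrable_mul {g χ : EuclideanSpace ℝ (Fin n) → ℝ} (hg : LocallyIntegrable g)
      (hχ : ContDiff ℝ (⊤ : ℕ∞) χ) (hχc : HasCompactSupport χ) :
      Integrable fun x => g x * χ x := by
    simpa only [smul_eq_mul, mul_comm] using
      hg.integrable_smul_left_of_hasCompactSupport hχ.continuous hχc
  have hDr (r : (Σ j, Fin (α j)) → Fin n) := hD (multiIndex r) (sum_multiIndex_sigma r)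
  simp only [dirOp_eq_sum_multiIndex, Finset.mul_sum, Finset.sum_mul, mul_left_comm (f _),
    mul_assoc]
  rw [integral_finsetSum _ fun r _ => (integrable_mul hf (contDiff_mderiv hψ _)
      (hasCompactSupport_mderiv hψc _)).const_mul _,
    integral_finsetSum _ fun r _ => (integrable_mul (hDr r).1 hψ hψc).const_mul _, Finset.mul_sum]
  refine Finset.sum_congr rfl fun r _ => ?_
  rw [integral_const_mul, integral_const_mul, (hDr r).2 ψ hψ hψc, sum_multiIndex_sigma,
    mul_left_comm]

theorem IsWeakDeriv.comp_matVec {M : Matrix (Fin n) (Fin n) ℝ} (hM : M.det ≠ 0)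
    {f : EuclideanSpace ℝ (Fin n) → ℝ} {D : (Fin n → ℕ) → EuclideanSpace ℝ (Fin n) → ℝ}
    (hf : LocallyIntegrable f)
    (hD : ∀ β : Fin n → ℕ, ∑ i, β i = ∑ i, α i → LocallyIntegrable (D β) ∧ IsWeakDeriv β f (D β)) :
    IsWeakDeriv α (fun x => f (matVec M x)) (fun x => dirOp M α D (matVec M x)) := by
  intro φ hφ hφc
  have hdet : LinearMap.det (Matrix.toEuclideanLin M) ≠ 0 := det_toEuclideanLin M ▸ hM
  let L := (Matrix.toEuclideanCLM (n := Fin n) (𝕜 := ℝ) M).toContinuousLinearEquivOfDetNeZero hdet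
  obtain ⟨ψ, hψ, hψc, rfl⟩ : ∃ ψ : EuclideanSpace ℝ (Fin n) → ℝ,
      ContDiff ℝ (⊤ : ℕ∞) ψ ∧ HasCompactSupport ψ ∧ φ = fun x => ψ (matVec M x) :=
    ⟨φ ∘ L.symm, hφ.comp L.symm.contDiff, hφc.comp_homeomorph L.symm.toHomeomorph,
      funext fun x => congrArg φ (L.symm_apply_apply x).symm⟩
  have cov (g : EuclideanSpace ℝ (Fin n) → ℝ) :
      ∫ x, g (matVec M x) = |M.det|⁻¹ * ∫ x, g x := by
    rw [← det_toEuclideanLin]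
    exact integral_comp_linearMap volume hdet g
  simp only [mderiv_comp_matVec M hψ]
  rw [cov fun z => f z * dirOp M α (fun β => mderiv β ψ) z, cov fun z => dirOp M α D z * ψ z,
    integral_mul_dirOp_mderiv M hf hD hψ hψc, mul_left_comm]

end WeakDerivatives

theorem pow_le_one_add_pow {R : Type*} [Semiring R] [LinearOrder R] [IsStrictOrderedRing R]
    {t : R} (ht : 0 ≤ t) {m k : ℕ} (h : m ≤ k) : t ^ m ≤ 1 + t ^ k := by
  rcases le_total t 1 with ht1 | ht1
  · exact (pow_le_one₀ ht ht1).trans (le_add_of_nonneg_right (pow_nonneg ht k))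
  · exact (pow_le_pow_right₀ ht1 h).trans (le_add_of_nonneg_left zero_le_one)

section Integrability

variable {n : ℕ} {Y : Type*} [MeasurableSpace Y] {ν : Measure Y}
  {A : Y → Matrix (Fin n) (Fin n) ℝ}

theorem measurable_matrix_det (hA : ∀ i j, Measurable fun y => A y i j) :
    Measurable fun y => (A y).det := by
  simp only [Matrix.det_apply']
  fun_prop

theorem measurable_frobNorm (hA : ∀ i j, Measurable fun y => A y i j) :
    Measurable fun y => frobNorm (A y) := by
  unfold frobNorm
  fun_prop

theorem measurable_matVec_prod (hA : ∀ i j, Measurable fun y => A y i j) :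
    Measurable fun p : Y × EuclideanSpace ℝ (Fin n) => matVec (A p.1) p.2 := by
  refine (WithLp.measurable_toLp 2 (Fin n → ℝ)).comp (measurable_pi_lambda _ fun i => ?_)
  simp only [Matrix.mulVec, dotProduct, WithLp.equiv_apply]
  fun_prop

theorem quasiMeasurePreserving_matVec_prod (hA : ∀ i j, Measurable fun y => A y i j)
    (hdet : ∀ᵐ y ∂ν, (A y).det ≠ 0) :
    Measure.QuasiMeasurePreserving
      (fun p : Y × EuclideanSpace ℝ (Fin n) => matVec (A p.1) p.2) (ν.prod volume) volume :=
  QuasiMeasurePreserving.prod_of_right (measurable_matVec_prod hA) <| hdet.mono fun y hy =>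
    Measure.LinearMap.quasiMeasurePreserving volume (Matrix.toEuclideanLin (A y))
      (det_toEuclideanLin (A y) ▸ hy)

theorem integrable_frobNorm_pow_mul (hA : ∀ i j, Measurable fun y => A y i j) {w : Y → ℝ}
    (hw : AEStronglyMeasurable w ν) {m k : ℕ} (hmk : m ≤ k)
    (hint : Integrable (fun y => |(A y).det|⁻¹ * (1 + frobNorm (A y) ^ k) * |w y|) ν) :
    Integrable (fun y => |(A y).det|⁻¹ * frobNorm (A y) ^ m * |w y|) ν := by
  have hfrob (y : Y) : 0 ≤ frobNorm (A y) := Real.sqrt_nonneg _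
  have hcoef : Measurable fun y => |(A y).det|⁻¹ * frobNorm (A y) ^ m :=
    (measurable_matrix_det hA).abs.inv.mul ((measurable_frobNorm hA).pow_const m)
  refine hint.mono' (hcoef.aestronglyMeasurable.mul hw.norm) (.of_forall fun y => ?_)
  rw [Real.norm_of_nonneg (by have := hfrob y; positivity)]
  gcongr
  exact pow_le_one_add_pow (hfrob y) hmk

theorem integrable_prod_mul_comp_matVec (hA : ∀ i j, Measurable fun y => A y i j)
    (hdet : ∀ᵐ y ∂ν, (A y).det ≠ 0) {w : Y → ℝ} (hw : Integrable (fun y => |(A y).det|⁻¹ * w y) ν)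
    {g : EuclideanSpace ℝ (Fin n) → ℝ} (hg : Integrable g) :
    Integrable (fun p : Y × EuclideanSpace ℝ (Fin n) => w p.1 * g (matVec (A p.1) p.2))
      (ν.prod volume) := by
  have hw_meas : AEStronglyMeasurable w ν := by
    refine ((measurable_matrix_det hA).abs.aestronglyMeasurable.mul
      hw.aestronglyMeasurable).congr (hdet.mono fun y hy => ?_)
    exact mul_inv_cancel_left₀ (abs_ne_zero.2 hy) (w y)
  have hdetLin {y : Y} (hy : (A y).det ≠ 0) :
      LinearMap.det (Matrix.toEuclideanLin (A y)) ≠ 0 := det_toEuclideanLin (A y) ▸ hy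
  have h_meas : AEStronglyMeasurable
      (fun p : Y × EuclideanSpace ℝ (Fin n) => w p.1 * g (matVec (A p.1) p.2)) (ν.prod volume) :=
    hw_meas.comp_fst.mul (hg.aestronglyMeasurable.comp_quasiMeasurePreserving
      (quasiMeasurePreserving_matVec_prod hA hdet))
  refine (integrable_prod_iff h_meas).2
    ⟨hdet.mono fun y hy => (integrable_comp_linearMap volume (hdetLin hy) hg).const_mul (w y),
      (hw.norm.mul_const (∫ x, ‖g x‖)).congr (hdet.mono fun y hy => ?_)⟩
  have cov : ∫ x, ‖g (matVec (A y) x)‖ = |(A y).det|⁻¹ * ∫ x, ‖g x‖ := by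
    rw [← det_toEuclideanLin]
    exact integral_comp_linearMap volume (hdetLin hy) fun x => ‖g x‖
  simp only [norm_mul, norm_inv, Real.norm_eq_abs, abs_abs, integral_const_mul] at cov ⊢
  rw [cov]
  ring

theorem integrable_prod_mul_dirOp_matVec (hA : ∀ i j, Measurable fun y => A y i j)
    (hdet : ∀ᵐ y ∂ν, (A y).det ≠ 0) {α : Fin n → ℕ} {w : Y → ℝ} (hw : AEStronglyMeasurable w ν)
    (hint : Integrable (fun y => |(A y).det|⁻¹ * frobNorm (A y) ^ (∑ i, α i) * |w y|) ν)
    {D : (Fin n → ℕ) → EuclideanSpace ℝ (Fin n) → ℝ}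
    (hD : ∀ β : Fin n → ℕ, ∑ i, β i = ∑ i, α i → Integrable (D β)) :
    Integrable (fun p : Y × EuclideanSpace ℝ (Fin n) =>
      w p.1 * dirOp (A p.1) α D (matVec (A p.1) p.2)) (ν.prod volume) := by
  simp only [dirOp_eq_sum_multiIndex, Finset.mul_sum, ← mul_assoc]
  refine integrable_finsetSum _ fun r _ => ?_
  refine integrable_prod_mul_comp_matVec (w := fun y => w y * ∏ p, A y (r p) p.1) hA hdet
    (hint.mono' ?_ (.of_forall fun y => ?_)) (hD _ (sum_multiIndex_sigma r))
  · have hcoef : Measurable fun y => ∏ p, A y (r p) p.1 := by fun_prop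
    exact (measurable_matrix_det hA).abs.inv.aestronglyMeasurable.mul
      (hw.mul hcoef.aestronglyMeasurable)
  · have hcoef : |∏ p, A y (r p) p.1| ≤ frobNorm (A y) ^ ∑ i, α i := by
      simpa using abs_prod_apply_le_frobNorm_pow (A y) r Sigma.fst
    rw [Real.norm_eq_abs, abs_mul, abs_inv, abs_abs, abs_mul, mul_comm |w y|, ← mul_assoc]
    gcongr

end Integrability

theorem weakDeriv_hausdorffOp_general {Y : Type*} [MeasurableSpace Y] (ν : Measure Y) [SFinite ν]
    (n k : ℕ) (Φ : Y → ℝ) (A : Y → Matrix (Fin n) (Fin n) ℝ)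
    (hΦ : AEStronglyMeasurable Φ ν) (hA : ∀ i j, Measurable fun y => A y i j)
    (hinv : ∀ᵐ y ∂ν, Φ y ≠ 0 → (A y).det ≠ 0)
    (hint : Integrable (fun y => |(A y).det|⁻¹ * (1 + frobNorm (A y) ^ k) * |Φ y|) ν)
    (f : EuclideanSpace ℝ (Fin n) → ℝ)
    (D : (Fin n → ℕ) → EuclideanSpace ℝ (Fin n) → ℝ)
    (hf : HasSobolevDerivs k f D)
    (α : Fin n → ℕ) (hα : ∑ i, α i ≤ k) :
    IsWeakDeriv α (fun x => ∫ y, Φ y * f (matVec (A y) x) ∂ν)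
      (fun x => ∫ y, Φ y * dirOp (A y) α D (matVec (A y) x) ∂ν) := by
  -- On `S` every `A y` is invertible, and `Φ` vanishes almost everywhere off `S`.
  let S : Set Y := {y | (A y).det ≠ 0}
  have hdet : ∀ᵐ y ∂ν.restrict S, (A y).det ≠ 0 :=
    ae_restrict_mem (measurable_matrix_det hA (measurableSet_singleton 0).compl)
  have restrict_eq (g : Y → ℝ) : ∫ y in S, Φ y * g y ∂ν = ∫ y, Φ y * g y ∂ν :=
    setIntegral_eq_integral_of_ae_compl_eq_zero <| hinv.mono fun y hy hyS => by
      rw [not_not.1 (mt hy hyS), zero_mul]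
  have weight_integrable {m : ℕ} (hm : m ≤ k) :
      Integrable (fun y => |(A y).det|⁻¹ * frobNorm (A y) ^ m * |Φ y|) (ν.restrict S) :=
    (integrable_frobNorm_pow_mul hA hΦ hm hint).restrict
  have Φ_integrable : Integrable (fun y => |(A y).det|⁻¹ * Φ y) (ν.restrict S) := by
    refine (integrable_norm_iff ((measurable_matrix_det hA).abs.inv.aestronglyMeasurable.mul
      hΦ.restrict)).1 ?_
    simpa [abs_mul] using weight_integrable k.zero_le
  have f_integrable : Integrable f := hf.1 ▸ (hf.2 0 (by simp)).1
  have hD (β : Fin n → ℕ) (hβ : ∑ i, β i = ∑ i, α i) := hf.2 β (hβ.trans_le hα)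
  simp only [← restrict_eq]
  exact IsWeakDeriv.integral (integrable_prod_mul_comp_matVec hA hdet Φ_integrable f_integrable)
    (integrable_prod_mul_dirOp_matVec hA hdet hΦ.restrict (weight_integrable hα)
      fun β hβ => (hD β hβ).1)
    (hdet.mono fun y hy => (IsWeakDeriv.comp_matVec hy f_integrable.locallyIntegrable
      fun β hβ => (hD β hβ).imp_left Integrable.locallyIntegrable).const_mul (Φ y))

/-- Under the integrability condition, for `f ∈ W^{k,1}` and `|α| ≤ k`, the weak
derivative of order `α` of `H_{Φ,A} f` is
`x ↦ ∫ Φ(y) [∏_j (Σ_i a_{ij}(y) ∂/∂xᵢ)^{α_j}](f)(A(y)x) dy`. -/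
theorem weakDeriv_hausdorffOp (n k : ℕ)
    (Φ : EuclideanSpace ℝ (Fin n) → ℝ)
    (A : EuclideanSpace ℝ (Fin n) → Matrix (Fin n) (Fin n) ℝ)
    (hΦ : Measurable Φ) (hA : ∀ i j, Measurable fun y => A y i j)
    (hinv : ∀ᵐ y : EuclideanSpace ℝ (Fin n), Φ y ≠ 0 → (A y).det ≠ 0)
    (hint : Integrable
      (fun y => |(A y).det|⁻¹ * (1 + frobNorm (A y) ^ k) * |Φ y|))
    (f : EuclideanSpace ℝ (Fin n) → ℝ)
    (D : (Fin n → ℕ) → EuclideanSpace ℝ (Fin n) → ℝ)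
    (hf : HasSobolevDerivs k f D)
    (α : Fin n → ℕ) (hα : ∑ i, α i ≤ k) :
    IsWeakDeriv α (hausdorffOp Φ A f)
      (fun x => ∫ y, Φ y * dirOp (A y) α D (matVec (A y) x)) :=
  weakDeriv_hausdorffOp_general volume n k Φ A hΦ.aestronglyMeasurable hA hinv hint f D hf α hα

end
end

section
/- Let Φ be a nonnegative measurable function on ℝ^n, let A(y) be a measurable n×n-matrix-valued function with A(y) invertible for a.e. y in the support of Φ, and let f ∈ L^1(ℝ^n) be nonnegative. Then ∫_{ℝ^n} |H_{Φ,A} f(x)| dx = ‖f‖_{L^1} · ∫_{ℝ^n} |det A(y)|^{-1} Φ(y) dy (with the convention that both sides may be +∞). -/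
open MeasureTheory

noncomputable section

/-!
Absorb the weight `Φ` into the measure on the parameter space: for the measure `Φ dy`, almost every
`A y` is invertible. An invertible linear map preserves null sets, hence by Fubini so does
`(x, y) ↦ A y x`; this makes `f (A y x)` jointly a.e. measurable even if `f` is only
a.e. measurable. Tonelli's theorem then reduces the identity to the change of variables
`∫ f (A y x) dx = |det (A y)|⁻¹ ∫ f` for each fixed `y`.
-/

theorem measurable_ofReal_inv_abs_det {E Y : Type*} [NormedAddCommGroup E] [NormedSpace ℝ E]
    [MeasurableSpace Y] {L : Y → E →L[ℝ] E} (hL : Measurable L) :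
    Measurable fun y => ENNReal.ofReal |(L y).det|⁻¹ :=
  (ContinuousLinearMap.continuous_det.measurable.comp hL).abs.inv.ennreal_ofReal

section HaarMeasure

open Measure
open scoped ENNReal

variable {E Y : Type*} [NormedAddCommGroup E] [NormedSpace ℝ E] [FiniteDimensional ℝ E]
  [MeasurableSpace E] [BorelSpace E] (μ : Measure E) [μ.IsAddHaarMeasure]

theorem lintegral_comp_continuousLinearMap {L : E →L[ℝ] E} (hL : L.det ≠ 0) (f : E → ℝ≥0∞) :
    ∫⁻ x, f (L x) ∂μ = ENNReal.ofReal |L.det|⁻¹ * ∫⁻ x, f x ∂μ := by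
  let e := (L.toContinuousLinearEquivOfDetNeZero hL).toHomeomorph.toMeasurableEquiv
  have hmap : μ.map L = ENNReal.ofReal |L.det|⁻¹ • μ :=
    abs_inv L.det ▸ map_linearMap_addHaar_eq_smul_addHaar μ hL
  calc ∫⁻ x, f (L x) ∂μ = ∫⁻ x, f x ∂μ.map L := (lintegral_map_equiv f e).symm
    _ = ENNReal.ofReal |L.det|⁻¹ * ∫⁻ x, f x ∂μ := by
      rw [hmap, lintegral_smul_measure, smul_eq_mul]

theorem quasiMeasurePreserving_continuousLinearMap {L : E →L[ℝ] E} (hL : L.det ≠ 0) :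
    QuasiMeasurePreserving L μ μ where
  measurable := L.measurable
  absolutelyContinuous :=
    map_linearMap_addHaar_eq_smul_addHaar μ hL ▸ smul_absolutelyContinuous

variable [MeasurableSpace Y] {ν : Measure Y} [SFinite ν] {L : Y → E →L[ℝ] E}

theorem quasiMeasurePreserving_uncurry_continuousLinearMap (hL : Measurable L)
    (hdet : ∀ᵐ y ∂ν, (L y).det ≠ 0) :
    QuasiMeasurePreserving (fun p : E × Y => L p.2 p.1) (μ.prod ν) μ :=
  QuasiMeasurePreserving.prod_of_left
    ((ContinuousLinearMap.measurable_apply₂ (𝕜 := ℝ)).comp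
      ((hL.comp measurable_snd).prodMk measurable_fst))
    (hdet.mono fun _ => quasiMeasurePreserving_continuousLinearMap μ)

theorem lintegral_lintegral_comp_continuousLinearMap {f : E → ℝ≥0∞} (hL : Measurable L)
    (hdet : ∀ᵐ y ∂ν, (L y).det ≠ 0) (hf : AEMeasurable f μ) :
    ∫⁻ x, ∫⁻ y, f (L y x) ∂ν ∂μ
      = (∫⁻ x, f x ∂μ) * ∫⁻ y, ENNReal.ofReal |(L y).det|⁻¹ ∂ν := by
  calc ∫⁻ x, ∫⁻ y, f (L y x) ∂ν ∂μ
      = ∫⁻ y, ∫⁻ x, f (L y x) ∂μ ∂ν :=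
        lintegral_lintegral_swap <| hf.comp_quasiMeasurePreserving <|
          quasiMeasurePreserving_uncurry_continuousLinearMap μ hL hdet
    _ = ∫⁻ y, ENNReal.ofReal |(L y).det|⁻¹ * ∫⁻ x, f x ∂μ ∂ν :=
        lintegral_congr_ae <| hdet.mono fun _ hy => lintegral_comp_continuousLinearMap μ hy f
    _ = (∫⁻ x, f x ∂μ) * ∫⁻ y, ENNReal.ofReal |(L y).det|⁻¹ ∂ν := by
        rw [lintegral_mul_const _ (measurable_ofReal_inv_abs_det hL), mul_comm]

theorem lintegral_hausdorffOp_eq_general {Φ : Y → ℝ≥0∞} {f : E → ℝ≥0∞} (hΦ : AEMeasurable Φ ν)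
    (hL : Measurable L) (hdet : ∀ᵐ y ∂ν, Φ y ≠ 0 → (L y).det ≠ 0) (hf : AEMeasurable f μ) :
    ∫⁻ x, ∫⁻ y, Φ y * f (L y x) ∂ν ∂μ
      = (∫⁻ x, f x ∂μ) * ∫⁻ y, ENNReal.ofReal |(L y).det|⁻¹ * Φ y ∂ν := by
  have hdetΦ : ∀ᵐ y ∂ν.withDensity Φ, (L y).det ≠ 0 := (ae_withDensity_iff' hΦ).2 hdet
  have aemeasurable_uncurry :
      AEMeasurable (fun p : E × Y => f (L p.2 p.1)) (μ.prod (ν.withDensity Φ)) :=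
    hf.comp_quasiMeasurePreserving
      (quasiMeasurePreserving_uncurry_continuousLinearMap μ hL hdetΦ)
  calc ∫⁻ x, ∫⁻ y, Φ y * f (L y x) ∂ν ∂μ
      = ∫⁻ x, ∫⁻ y, f (L y x) ∂ν.withDensity Φ ∂μ :=
        lintegral_congr_ae <| aemeasurable_uncurry.aestronglyMeasurable.prodMk_left.mono fun _ hx =>
          (lintegral_withDensity_eq_lintegral_mul₀' hΦ hx.aemeasurable).symm
    _ = (∫⁻ x, f x ∂μ) * ∫⁻ y, ENNReal.ofReal |(L y).det|⁻¹ ∂ν.withDensity Φ :=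
        lintegral_lintegral_comp_continuousLinearMap μ hL hdetΦ hf
    _ = (∫⁻ x, f x ∂μ) * ∫⁻ y, ENNReal.ofReal |(L y).det|⁻¹ * Φ y ∂ν := by
        simp only [lintegral_withDensity_eq_lintegral_mul₀ hΦ
          (measurable_ofReal_inv_abs_det hL).aemeasurable, Pi.mul_apply, mul_comm]

end HaarMeasure

section Matrix

variable {ι Y : Type*} [Fintype ι] [DecidableEq ι]

theorem det_toEuclideanCLM (M : Matrix ι ι ℝ) :
    (Matrix.toEuclideanCLM (𝕜 := ℝ) M).det = M.det := by
  rw [ContinuousLinearMap.det, Matrix.coe_toEuclideanCLM_eq_toEuclideanLin]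
  simp

theorem measurable_toEuclideanCLM [MeasurableSpace Y] {A : Y → Matrix ι ι ℝ}
    (hA : ∀ i j, Measurable fun y => A y i j) :
    Measurable fun y => Matrix.toEuclideanCLM (𝕜 := ℝ) (A y) := by
  have continuous_entries :
      Continuous fun a : ι → ι → ℝ => Matrix.toEuclideanCLM (𝕜 := ℝ) (Matrix.of a) :=
    LinearMap.continuous_of_finiteDimensional
      ((Matrix.toEuclideanCLM (n := ι) (𝕜 := ℝ)).toAlgEquiv.toLinearMap ∘ₗ
        (Matrix.ofLinearEquiv ℝ).toLinearMap)
  exact continuous_entries.measurable.comp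
    (measurable_pi_lambda _ fun i => measurable_pi_lambda _ fun j => hA i j)

theorem toEuclideanCLM_apply_eq_matVec {n : ℕ} (M : Matrix (Fin n) (Fin n) ℝ)
    (x : EuclideanSpace ℝ (Fin n)) : Matrix.toEuclideanCLM (𝕜 := ℝ) M x = matVec M x :=
  rfl

end Matrix

/-- For nonnegative measurable `Φ`, a matrix family `A(y)` invertible a.e. on
`supp Φ`, and nonnegative `f ∈ L¹`, Tonelli's theorem gives
`∫ |H_{Φ,A}f(x)| dx = ‖f‖_{L¹} ∫ |det A(y)|⁻¹ Φ(y) dy`, where both sides may be `+∞`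
(the integrals are taken in the unsigned, extended-real sense). -/
theorem lintegral_hausdorffOp_eq (n : ℕ)
    (Φ : EuclideanSpace ℝ (Fin n) → ℝ)
    (A : EuclideanSpace ℝ (Fin n) → Matrix (Fin n) (Fin n) ℝ)
    (f : EuclideanSpace ℝ (Fin n) → ℝ)
    (hΦ : Measurable Φ) (hΦ0 : ∀ y, 0 ≤ Φ y)
    (hA : ∀ i j, Measurable fun y => A y i j)
    (hinv : ∀ᵐ y : EuclideanSpace ℝ (Fin n), Φ y ≠ 0 → (A y).det ≠ 0)
    (hf : Integrable f) (hf0 : ∀ x, 0 ≤ f x) :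
    ∫⁻ x, ∫⁻ y, ENNReal.ofReal (Φ y * f (matVec (A y) x))
      = (∫⁻ x, ENNReal.ofReal (f x)) *
          ∫⁻ y, ENNReal.ofReal (|(A y).det|⁻¹ * Φ y) := by
  have hdet : ∀ᵐ y, ENNReal.ofReal (Φ y) ≠ 0 → (Matrix.toEuclideanCLM (𝕜 := ℝ) (A y)).det ≠ 0 :=
    hinv.mono fun y hy hΦy => det_toEuclideanCLM (A y) ▸ hy fun h => hΦy (by simp [h])
  simpa only [toEuclideanCLM_apply_eq_matVec, det_toEuclideanCLM, ENNReal.ofReal_mul (hΦ0 _),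
    ENNReal.ofReal_mul (inv_nonneg.2 (abs_nonneg _))] using
    lintegral_hausdorffOp_eq_general volume hΦ.ennreal_ofReal.aemeasurable
      (measurable_toEuclideanCLM hA) hdet hf.aemeasurable.ennreal_ofReal

end
end

section
/- Let B be an n×n real matrix with nonnegative entries and nonzero columns b⃗_1, …, b⃗_n, and suppose |det B| > η ∏_{j=1}^n ‖b⃗_j‖ for some η > 0, where ‖·‖ is the Euclidean norm. Let Ω = (0,∞)^n and B(0,1) the open Euclidean unit ball of ℝ^n. Then the Lebesgue measure of (B·Ω) ∩ B(0,1) satisfies |(B·Ω) ∩ B(0,1)| > (η/n^n) · |Ω ∩ B(0,1)|, where B·Ω = { Bx : x ∈ Ω }. -/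
open MeasureTheory

noncomputable section

/-!
Let `b j` be the columns of `B` and `D` the diagonal matrix with entries `1 / (√n * ‖b j‖)`. The
columns of `B * D` have norm `1 / √n`, so by Cauchy-Schwarz `B * D` does not increase Euclidean
norms. It therefore maps `Ω ∩ B(0, 1)` into `(B · Ω) ∩ B(0, 1)`, because `D` preserves the orthant
`Ω`, and it scales volumes by `|det B| / (√n ^ n * ∏ j, ‖b j‖) > η / √n ^ n ≥ η / n ^ n`.
-/

section

open Matrix WithLp Metric Set Filter Topology

theorem matVec_eq_toLpLin {n : ℕ} (M : Matrix (Fin n) (Fin n) ℝ) : matVec M = toLpLin 2 2 M :=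
  rfl

theorem sqrt_natCast_pow_self_pos (n : ℕ) : 0 < √(n : ℝ) ^ n := by
  rcases n.eq_zero_or_pos with rfl | hn
  · simp
  · positivity

theorem sqrt_natCast_le_self (n : ℕ) : √(n : ℝ) ≤ n := by
  rw [Real.sqrt_le_self_iff]
  exact_mod_cast n.eq_zero_or_pos

theorem col_ne_zero_of_det_ne_zero {ι R : Type*} [Fintype ι] [DecidableEq ι] [CommRing R]
    {A : Matrix ι ι R} (hA : A.det ≠ 0) (j : ι) : A.col j ≠ 0 :=
  fun hj ↦ hA (det_eq_zero_of_column_eq_zero j (congrFun hj))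

variable {ι : Type*}

/-- The open positive orthant `Ω = (0, ∞) ^ ι`, as a subset of Euclidean space. -/
def positiveOrthant (ι : Type*) : Set (EuclideanSpace ℝ ι) :=
  {x | ∀ i, 0 < x i}

theorem isOpen_positiveOrthant [Finite ι] : IsOpen (positiveOrthant ι) := by
  simp only [positiveOrthant, ofPred_forall]
  exact isOpen_iInter_of_finite fun i ↦ isOpen_lt continuous_const (by fun_prop)

variable [Fintype ι]

theorem nonempty_positiveOrthant_inter_ball {r : ℝ} (hr : 0 < r) :
    (positiveOrthant ι ∩ ball 0 r).Nonempty := by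
  have hlim : Tendsto (fun t : ℝ ↦ t • (toLp 2 1 : EuclideanSpace ℝ ι)) (𝓝[>] 0) (𝓝 0) :=
    ((continuous_id.smul continuous_const).tendsto' _ _ (zero_smul _ _)).mono_left
      nhdsWithin_le_nhds
  obtain ⟨t, htr, ht⟩ :=
    ((hlim.eventually (ball_mem_nhds 0 hr)).and self_mem_nhdsWithin).exists
  exact ⟨t • toLp 2 1, fun i ↦ by simpa using ht, htr⟩

theorem volume_positiveOrthant_inter_ball_pos {r : ℝ} (hr : 0 < r) :
    0 < volume (positiveOrthant ι ∩ ball 0 r) :=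
  (isOpen_positiveOrthant.inter isOpen_ball).measure_pos _ (nonempty_positiveOrthant_inter_ball hr)

theorem norm_sum_smul_le_sqrt_mul_sqrt {𝕜 E : Type*} [NormedField 𝕜] [SeminormedAddCommGroup E]
    [NormedSpace 𝕜 E] (c : ι → 𝕜) (v : ι → E) :
    ‖∑ j, c j • v j‖ ≤ √(∑ j, ‖c j‖ ^ 2) * √(∑ j, ‖v j‖ ^ 2) :=
  calc ‖∑ j, c j • v j‖ ≤ ∑ j, ‖c j‖ * ‖v j‖ := norm_sum_le_of_le _ fun _ _ ↦ norm_smul_le _ _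
    _ ≤ √(∑ j, ‖c j‖ ^ 2) * √(∑ j, ‖v j‖ ^ 2) := Real.sum_mul_le_sqrt_mul_sqrt _ _ _

variable [DecidableEq ι]

theorem norm_toLpLin_le_sqrt_sum_norm_col_sq {m 𝕜 : Type*} [Fintype m] [RCLike 𝕜]
    (A : Matrix m ι 𝕜) (x : EuclideanSpace 𝕜 ι) :
    ‖toLpLin 2 2 A x‖ ≤ √(∑ j, ‖toLp 2 (A.col j)‖ ^ 2) * ‖x‖ := by
  have hsum : toLpLin 2 2 A x = ∑ j, x j • toLp 2 (A.col j) := by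
    ext i
    simp [mulVec, dotProduct, mul_comm]
  rw [hsum, mul_comm, EuclideanSpace.norm_eq x]
  exact norm_sum_smul_le_sqrt_mul_sqrt _ _

theorem mapsTo_toLpLin_diagonal_positiveOrthant {d : ι → ℝ} (hd : ∀ j, 0 < d j) :
    MapsTo (toLpLin 2 2 (diagonal d)) (positiveOrthant ι) (positiveOrthant ι) := by
  intro x hx j
  simpa [mulVec_diagonal] using mul_pos (hd j) (hx j)

theorem norm_toLpLin_mul_diagonal_le (B : Matrix ι ι ℝ) {d : ι → ℝ}
    (hB : ∑ j, (d j * ‖toLp 2 (B.col j)‖) ^ 2 ≤ 1) (x : EuclideanSpace ℝ ι) :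
    ‖toLpLin 2 2 (B * diagonal d) x‖ ≤ ‖x‖ := by
  have hcol (j : ι) : toLp 2 ((B * diagonal d).col j) = d j • toLp 2 (B.col j) := by
    ext i
    simp [mul_comm]
  refine (norm_toLpLin_le_sqrt_sum_norm_col_sq _ x).trans
    (mul_le_of_le_one_left (norm_nonneg x) (Real.sqrt_le_one.mpr ?_))
  simpa only [hcol, norm_smul, mul_pow, Real.norm_eq_abs, sq_abs] using hB

theorem abs_det_mul_prod_mul_volume_le (B : Matrix ι ι ℝ) {d : ι → ℝ} (hd : ∀ j, 0 < d j)
    (hB : ∑ j, (d j * ‖toLp 2 (B.col j)‖) ^ 2 ≤ 1) (r : ℝ) :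
    ENNReal.ofReal (|B.det| * ∏ j, d j) * volume (positiveOrthant ι ∩ ball 0 r) ≤
      volume (toLpLin 2 2 B '' positiveOrthant ι ∩ ball 0 r) := by
  have hdet : |(B * diagonal d).det| = |B.det| * ∏ j, d j := by
    rw [det_mul, det_diagonal, abs_mul, abs_of_pos (Finset.prod_pos fun j _ ↦ hd j)]
  rw [← hdet, ← LinearMap.det_toLpLin 2, ← Measure.addHaar_image_linearMap]
  refine measure_mono ?_
  rintro _ ⟨x, ⟨hx, hxr⟩, rfl⟩
  refine ⟨⟨_, mapsTo_toLpLin_diagonal_positiveOrthant hd hx, ?_⟩, ?_⟩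
  · rw [toLpLin_mul_same, LinearMap.comp_apply]
  · rw [mem_ball_zero_iff] at hxr ⊢
    exact (norm_toLpLin_mul_diagonal_le B hB x).trans_lt hxr

theorem abs_det_div_prod_norm_col_mul_volume_le (B : Matrix ι ι ℝ) (r : ℝ) :
    ENNReal.ofReal (|B.det| / ∏ j, (√(Fintype.card ι) * ‖toLp 2 (B.col j)‖)) *
        volume (positiveOrthant ι ∩ ball 0 r) ≤
      volume (toLpLin 2 2 B '' positiveOrthant ι ∩ ball 0 r) := by
  by_cases hB : B.det = 0
  · simp [hB]
  have hcol (j : ι) : 0 < ‖toLp 2 (B.col j)‖ :=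
    norm_pos_iff.mpr ((toLp_eq_zero 2).not.mpr (col_ne_zero_of_det_ne_zero hB j))
  have hcard (j : ι) : 0 < √(Fintype.card ι : ℝ) :=
    Real.sqrt_pos.mpr (Nat.cast_pos.mpr (Fintype.card_pos_iff.mpr ⟨j⟩))
  rw [div_eq_mul_inv, ← Finset.prod_inv_distrib]
  refine abs_det_mul_prod_mul_volume_le B
    (fun j ↦ inv_pos.mpr (mul_pos (hcard j) (hcol j))) ?_ r
  have hterm (j : ι) : ((√(Fintype.card ι) * ‖toLp 2 (B.col j)‖)⁻¹ * ‖toLp 2 (B.col j)‖) ^ 2 =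
      (Fintype.card ι : ℝ)⁻¹ := by
    rw [mul_inv, inv_mul_cancel_right₀ (hcol j).ne', inv_pow, Real.sq_sqrt (Nat.cast_nonneg _)]
  simp only [hterm, Finset.sum_const, Finset.card_univ, nsmul_eq_mul]
  exact mul_inv_le_one

theorem measure_image_orthant_inter_ball_general (B : Matrix ι ι ℝ) {η r : ℝ} (hη : 0 ≤ η)
    (hr : 0 < r) (hdet : η * ∏ j, √(∑ i, B i j ^ 2) < |B.det|) :
    ENNReal.ofReal (η / √(Fintype.card ι) ^ Fintype.card ι) *
        volume (positiveOrthant ι ∩ ball 0 r) <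
      volume (toLpLin 2 2 B '' positiveOrthant ι ∩ ball 0 r) := by
  have hnorm (j : ι) : ‖toLp 2 (B.col j)‖ = √(∑ i, B i j ^ 2) := by
    simp [EuclideanSpace.norm_eq]
  have hdet_pos : 0 < |B.det| := hdet.trans_le' (by positivity)
  have hprod : 0 < ∏ j, √(∑ i, B i j ^ 2) := Finset.prod_pos fun j _ ↦ by
    rw [← hnorm, norm_pos_iff, ne_eq, toLp_eq_zero]
    exact col_ne_zero_of_det_ne_zero (abs_pos.mp hdet_pos) j
  have hcard : 0 < √(Fintype.card ι : ℝ) ^ Fintype.card ι := sqrt_natCast_pow_self_pos _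
  have hconst : η / √(Fintype.card ι) ^ Fintype.card ι <
      |B.det| / ∏ j, (√(Fintype.card ι) * ‖toLp 2 (B.col j)‖) := by
    simp only [hnorm, Finset.prod_mul_distrib, Finset.prod_const, Finset.card_univ]
    rw [mul_comm, ← div_div]
    exact div_lt_div_of_pos_right ((lt_div_iff₀ hprod).mpr hdet) hcard
  have hvol_top : volume (positiveOrthant ι ∩ ball 0 r) ≠ ⊤ :=
    measure_ne_top_of_subset inter_subset_right measure_ball_lt_top.ne
  refine lt_of_lt_of_le ?_ (abs_det_div_prod_norm_col_mul_volume_le B r)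
  exact ENNReal.mul_lt_mul_left (volume_positiveOrthant_inter_ball_pos hr).ne' hvol_top
    ((ENNReal.ofReal_lt_ofReal_iff_of_nonneg (by positivity)).mpr hconst)

end

/-- Let `B` be an `n × n` matrix with nonnegative entries and nonzero columns,
with `|det B| > η ∏_j ‖b⃗_j‖` for some `η > 0`.  Then, with `Ω = (0,∞)ⁿ` and `B(0,1)` the open
unit ball, `|(B·Ω) ∩ B(0,1)| > (η/nⁿ) |Ω ∩ B(0,1)|`. -/
theorem measure_image_orthant_inter_ball (n : ℕ)
    (B : Matrix (Fin n) (Fin n) ℝ) (η : ℝ) (hη : 0 < η)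
    (hpos : ∀ i j, 0 ≤ B i j)
    (hcol : ∀ j, (fun i => B i j) ≠ (0 : Fin n → ℝ))
    (hdet : η * ∏ j, Real.sqrt (∑ i, (B i j) ^ 2) < |B.det|) :
    ENNReal.ofReal (η / n ^ n) *
        volume ({x : EuclideanSpace ℝ (Fin n) | ∀ i, 0 < x i}
          ∩ Metric.ball (0 : EuclideanSpace ℝ (Fin n)) 1) <
      volume ((matVec B '' {x : EuclideanSpace ℝ (Fin n) | ∀ i, 0 < x i})
        ∩ Metric.ball (0 : EuclideanSpace ℝ (Fin n)) 1) := by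
  have hsharp := measure_image_orthant_inter_ball_general B hη.le one_pos hdet
  rw [Fintype.card_fin, ← matVec_eq_toLpLin] at hsharp
  refine lt_of_le_of_lt ?_ hsharp
  gcongr ENNReal.ofReal (η / ?_) * _
  · exact sqrt_natCast_pow_self_pos n
  · exact pow_le_pow_left₀ (Real.sqrt_nonneg _) (sqrt_natCast_le_self n) n

end
end

section
/- For every integer k ≥ 0, the Hardy operator H, defined by Hf(x) = (1/x) ∫_0^x f(t) dt for x ≠ 0, is not bounded on the Sobolev space W^{k,1}(ℝ): there exists f ∈ W^{k,1}(ℝ) such that Hf ∉ W^{k,1}(ℝ). In particular (the case k = 0), there exists f ∈ L^1(ℝ) with Hf ∉ L^1(ℝ). -/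
open MeasureTheory

noncomputable section

/-- `g` is the `m`-th weak derivative of `f` on `ℝ`:
`∫ f φ^{(m)} = (−1)^m ∫ g φ` for all test functions `φ ∈ C_c^∞(ℝ)`. -/
def IsWeakDerivR (m : ℕ) (f g : ℝ → ℝ) : Prop :=
  ∀ φ : ℝ → ℝ, ContDiff ℝ (⊤ : ℕ∞) φ → HasCompactSupport φ →
    ∫ x, f x * iteratedDeriv m φ x = (-1 : ℝ) ^ m * ∫ x, g x * φ x

/-- `f ∈ W^{k,1}(ℝ)`: `f` and all its weak derivatives up to order `k` exist and are in `L¹`. -/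
def MemW1 (k : ℕ) (f : ℝ → ℝ) : Prop :=
  ∃ D : ℕ → ℝ → ℝ, D 0 = f ∧
    ∀ m : ℕ, m ≤ k → Integrable (D m) ∧ IsWeakDerivR m f (D m)

/-- The Hardy operator `Hf(x) = x⁻¹ ∫₀ˣ f(t) dt`. -/
def hardyOp (f : ℝ → ℝ) : ℝ → ℝ := fun x => x⁻¹ * ∫ t in (0 : ℝ)..x, f t

/-!
If `f` is integrable on `(0, ∞)` with `c = ∫₀^∞ f ≠ 0`, then `Hf(x) ∼ c / x` as `x → ∞`, so `Hf` is
not even in `L¹`. A nonzero nonnegative test function supported in `(0, ∞)` is therefore a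
counterexample for every `k` simultaneously.
-/

open Filter Set Asymptotics
open scoped Topology

section IntegrationByParts

variable {A : Type*} [NormedRing A] [NormedAlgebra ℝ A] {f φ : ℝ → A}

lemma integral_mul_deriv_eq_neg_of_hasCompactSupport (hf : ContDiff ℝ 1 f) (hφ : ContDiff ℝ 1 φ)
    (hφs : HasCompactSupport φ) :
    ∫ x, f x * deriv φ x = -∫ x, deriv f x * φ x := by
  have hf' : Continuous (deriv f) := hf.continuous_deriv_one
  have hφ' : Continuous (deriv φ) := hφ.continuous_deriv_one
  exact integral_mul_deriv_eq_deriv_mul_of_integrable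
    (fun x _ => (hf.differentiable one_ne_zero x).hasDerivAt)
    (fun x _ => (hφ.differentiable one_ne_zero x).hasDerivAt)
    ((hf.continuous.mul hφ').integrable_of_hasCompactSupport hφs.deriv.mul_left)
    ((hf'.mul hφ.continuous).integrable_of_hasCompactSupport hφs.mul_left)
    ((hf.continuous.mul hφ.continuous).integrable_of_hasCompactSupport hφs.mul_left)

theorem integral_mul_iteratedDeriv_of_hasCompactSupport {m : ℕ} (hf : ContDiff ℝ m f)
    (hφ : ContDiff ℝ m φ) (hφs : HasCompactSupport φ) :
    ∫ x, f x * iteratedDeriv m φ x = (-1) ^ m * ∫ x, iteratedDeriv m f x * φ x := by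
  induction m generalizing φ with
  | zero => simp
  | succ n ih =>
    have hf' : ContDiff ℝ 1 (iteratedDeriv n f) := by
      rw [iteratedDeriv_eq_iterate]
      exact ContDiff.iterate_deriv' 1 n (by rwa [add_comm])
    have hφ' : ContDiff ℝ n (deriv φ) := (contDiff_succ_iff_deriv.1 (mod_cast hφ)).2.2
    calc ∫ x, f x * iteratedDeriv (n + 1) φ x
        = ∫ x, f x * iteratedDeriv n (deriv φ) x := by rw [iteratedDeriv_succ']
      _ = (-1) ^ n * ∫ x, iteratedDeriv n f x * deriv φ x :=
          ih (hf.of_le (mod_cast n.le_succ)) hφ' hφs.deriv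
      _ = (-1) ^ n * -∫ x, iteratedDeriv (n + 1) f x * φ x := by
          rw [integral_mul_deriv_eq_neg_of_hasCompactSupport hf'
            (hφ.of_le (mod_cast n.succ_pos)) hφs, iteratedDeriv_succ]
      _ = (-1) ^ (n + 1) * ∫ x, iteratedDeriv (n + 1) f x * φ x := by
          rw [pow_succ, mul_assoc, neg_one_mul]

end IntegrationByParts

lemma hasCompactSupport_iteratedDeriv {𝕜 F : Type*} [NontriviallyNormedField 𝕜]
    [NormedAddCommGroup F] [NormedSpace 𝕜 F] {f : 𝕜 → F} (hf : HasCompactSupport f) (m : ℕ) :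
    HasCompactSupport (iteratedDeriv m f) :=
  (hf.iteratedFDeriv m).comp_left
    (g := fun L : ContinuousMultilinearMap 𝕜 (fun _ : Fin m => 𝕜) F => L fun _ => 1) rfl

section Sobolev

variable {k m : ℕ} {f : ℝ → ℝ}

lemma isWeakDerivR_iteratedDeriv (hf : ContDiff ℝ m f) :
    IsWeakDerivR m f (iteratedDeriv m f) := fun _ hφ hφs =>
  integral_mul_iteratedDeriv_of_hasCompactSupport hf (hφ.of_le (mod_cast le_top)) hφs

lemma memW1_of_integrable_iteratedDeriv (hf : ContDiff ℝ k f)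
    (hf_int : ∀ m ≤ k, Integrable (iteratedDeriv m f)) : MemW1 k f :=
  ⟨fun m => iteratedDeriv m f, iteratedDeriv_zero, fun m hm =>
    ⟨hf_int m hm, isWeakDerivR_iteratedDeriv (hf.of_le (mod_cast hm))⟩⟩

lemma memW1_of_hasCompactSupport (hf : ContDiff ℝ k f) (hfs : HasCompactSupport f) :
    MemW1 k f :=
  memW1_of_integrable_iteratedDeriv hf fun m hm =>
    (hf.continuous_iteratedDeriv m (mod_cast hm)).integrable_of_hasCompactSupport
      (hasCompactSupport_iteratedDeriv hfs m)

lemma MemW1.integrable (hf : MemW1 k f) : Integrable f := by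
  obtain ⟨D, rfl, hD⟩ := hf
  exact (hD 0 k.zero_le).1

end Sobolev

section Hardy

variable {f : ℝ → ℝ}

lemma hardyOp_isEquivalent_atTop (hf : IntegrableOn f (Ioi 0)) (hf₀ : ∫ t in Ioi 0, f t ≠ 0) :
    hardyOp f ~[atTop] fun x => x⁻¹ * ∫ t in Ioi 0, f t := by
  have hlim : Tendsto (fun x => ∫ t in (0 : ℝ)..x, f t) atTop (𝓝 (∫ t in Ioi 0, f t)) :=
    intervalIntegral_tendsto_integral_Ioi 0 hf tendsto_id
  exact IsEquivalent.refl.mul ((isEquivalent_const_iff_tendsto hf₀).2 hlim)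

lemma not_integrableAtFilter_inv_atTop :
    ¬ IntegrableAtFilter (fun x : ℝ => x⁻¹) atTop := by
  rintro ⟨s, hs, hs_int⟩
  obtain ⟨a, ha⟩ := mem_atTop_sets.1 hs
  exact not_integrableOn_Ici_inv (hs_int.mono_set ha)

theorem not_integrableAtFilter_hardyOp_atTop (hf : IntegrableOn f (Ioi 0))
    (hf₀ : ∫ t in Ioi 0, f t ≠ 0) : ¬ IntegrableAtFilter (hardyOp f) atTop := by
  have hO : (fun x : ℝ => x⁻¹) =O[atTop] hardyOp f :=
    (isBigO_self_const_mul hf₀ _ _).trans <| by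
      simpa only [mul_comm] using (hardyOp_isEquivalent_atTop hf hf₀).isBigO_symm
  have hmeas : StronglyMeasurableAtFilter (fun x : ℝ => x⁻¹) atTop :=
    measurable_inv.stronglyMeasurable.stronglyMeasurableAtFilter
  exact fun h => not_integrableAtFilter_inv_atTop (hO.integrableAtFilter hmeas h)

end Hardy

lemma setIntegral_contDiffBump_pos {E : Type*} [NormedAddCommGroup E] [NormedSpace ℝ E]
    [HasContDiffBump E] [MeasurableSpace E] [BorelSpace E] [FiniteDimensional ℝ E] {μ : Measure E}
    [IsLocallyFiniteMeasure μ] [μ.IsOpenPosMeasure] {c : E} (b : ContDiffBump c) {s : Set E}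
    (hs : Metric.ball c b.rOut ⊆ s) : 0 < ∫ x in s, b x ∂μ := by
  rw [← b.support_eq] at hs
  rw [setIntegral_eq_integral_of_forall_compl_eq_zero fun x hx =>
    Function.notMem_support.1 (notMem_subset hs hx)]
  exact b.integral_pos

/-- For every integer `k ≥ 0`, the Hardy operator is not bounded on
`W^{k,1}(ℝ)`: there is `f ∈ W^{k,1}(ℝ)` with `Hf ∉ W^{k,1}(ℝ)`.  (For `k = 0`,
`W^{0,1}(ℝ) = L¹(ℝ)`, so in particular there is `f ∈ L¹` with `Hf ∉ L¹`.) -/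
theorem hardyOp_not_bounded_sobolev (k : ℕ) :
    ∃ f : ℝ → ℝ, MemW1 k f ∧ ¬ MemW1 k (hardyOp f) := by
  let b : ContDiffBump (2 : ℝ) := ⟨1, 2, one_pos, one_lt_two⟩
  have hb_mem : MemW1 k b := memW1_of_hasCompactSupport b.contDiff b.hasCompactSupport
  have hb_supp : Metric.ball 2 b.rOut ⊆ Ioi (0 : ℝ) := by
    rw [Real.ball_eq_Ioo]
    exact fun x hx => (sub_self (2 : ℝ)).ge.trans_lt hx.1
  have hb_pos : 0 < ∫ x in Ioi 0, b x := setIntegral_contDiffBump_pos b hb_supp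
  have hHb : ¬ IntegrableAtFilter (hardyOp b) atTop :=
    not_integrableAtFilter_hardyOp_atTop hb_mem.integrable.integrableOn hb_pos.ne'
  exact ⟨b, hb_mem, fun h => hHb (h.integrable.integrableAtFilter _)⟩

end
end
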